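/- Let δ be an increment function of size n and let [P,Q] be a right interval of height k ≥ 2 in the alt-Tamari poset Tam^δ_n, i.e. P = A d C_1⋯C_k B and Q = A C_1⋯C_k d B where each C_j is the δ-excursion in P of its first up step. Then P ≤ Q in Tam^δ_n and the interval [P,Q] is linear of height k. -/

import Mathlib

/-!
Common definitions.  A letter of a word is a `Bool`: `true` is an up step `u`,
`false` is a down step `d`.  Positions in words are 0-based.
-/

/-- A (possibly empty) Dyck word: as many `u`'s as `d`'s, and every
prefix has at least as many `u`'s as `d`'s. -/
def IsDyckPath (w : List Bool) : Prop :=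
  w.count true = w.count false ∧ ∀ p, p <+: w → p.count false ≤ p.count true

/-- A Dyck word of size `n`: `n` up steps, `n` down steps, every prefix has
at least as many `u`'s as `d`'s. -/
def IsDyckWord (n : ℕ) (w : List Bool) : Prop :=
  w.count true = n ∧ w.count false = n ∧ ∀ p, p <+: w → p.count false ≤ p.count true

/-- The set of Dyck words of size `n`. -/
def DyckSet (n : ℕ) : Set (List Bool) := {w | IsDyckWord n w}

/-- An increment function: a `{0,1}`-valued function (the paper's `δ : {1,…,n} → {0,1}`;
only the values on `{1,…,n}` are ever used). -/
def IsIncFun (δ : ℕ → ℤ) : Prop := ∀ i, δ i = 0 ∨ δ i = 1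

/-- The 0-based position in `w` of the `i`-th up step `u_i` (`i` is 1-based). -/
def upPos (w : List Bool) (i : ℕ) : ℕ :=
  ((List.range w.length).filter fun q => w.getD q false = true).getD (i - 1) 0

/-- `h_i(w)`: the (1-based, between 1 and 2n) position of the up step `u_i` in `w`. -/
def hpos (w : List Bool) (i : ℕ) : ℕ := upPos w i + 1

/-- The change of δ-altitude produced by the letter at position `q` of `w`:
the up step `u_i` contributes `δ i`, a down step contributes `-1`. -/
def stepVal (δ : ℕ → ℤ) (w : List Bool) (q : ℕ) : ℤ :=
  if w.getD q false = true then δ ((w.take (q + 1)).count true) else -1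

/-- The δ-elevation of the factor of `w` occupying positions `a, …, b-1`. -/
def elev (δ : ℕ → ℤ) (w : List Bool) (a b : ℕ) : ℤ :=
  ∑ q ∈ Finset.Ico a b, stepVal δ w q

/-- `C` is the δ-excursion of the up step of `w` at position `p`:
the smallest (nonempty) factor of `w` starting at `p` whose δ-elevation is `0`. -/
def IsDeltaExcAt (δ : ℕ → ℤ) (w : List Bool) (p : ℕ) (C : List Bool) : Prop :=
  w.getD p false = true ∧
  ∃ m, 0 < m ∧ p + m ≤ w.length ∧ C = (w.drop p).take m ∧
    elev δ w p (p + m) = 0 ∧ ∀ m', 0 < m' → m' < m → elev δ w p (p + m') ≠ 0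

/-- `C` is the excursion of the up step of `w` at position `p`: the smallest factor
of `w` starting at `p` that is itself a Dyck word. -/
def IsExcursionAt (w : List Bool) (p : ℕ) (C : List Bool) : Prop :=
  w.getD p false = true ∧
  ∃ m, 0 < m ∧ p + m ≤ w.length ∧ C = (w.drop p).take m ∧ IsDyckPath C ∧
    ∀ m', 0 < m' → m' < m → ¬ IsDyckPath ((w.drop p).take m')

/-- `ℓ_i(w; δ)`: the length of the δ-excursion of `u_i` in `w`. -/
noncomputable def excLen (δ : ℕ → ℤ) (w : List Bool) (i : ℕ) : ℕ :=
  sInf {m | 0 < m ∧ elev δ w (upPos w i) (upPos w i + m) = 0}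

/-- `Q` is the δ-rotation of `P` at some up step: `P = A d C B` with `d u_i` a valley
and `C` the δ-excursion of `u_i`, and `Q = A C d B`. -/
def DeltaRot (δ : ℕ → ℤ) (P Q : List Bool) : Prop :=
  ∃ A C B, P = A ++ false :: (C ++ B) ∧ Q = A ++ (C ++ false :: B) ∧
    IsDeltaExcAt δ P (A.length + 1) C

/-- The alt-Tamari order `Tam^δ`: reflexive transitive closure of δ-rotations. -/
def altLE (δ : ℕ → ℤ) : List Bool → List Bool → Prop :=
  Relation.ReflTransGen (DeltaRot δ)

/-- The Tamari order: the alt-Tamari order for `δ ≡ 1` (the δ-excursion of any up step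
is then its excursion). -/
def tamLE : List Bool → List Bool → Prop := altLE fun _ => 1

/-- The height (number of `u`'s minus number of `d`'s) of the length-`j` prefix of `w`. -/
def prefHeight (w : List Bool) (j : ℕ) : ℤ :=
  ((w.take j).count true : ℤ) - ((w.take j).count false : ℤ)

/-- The Dyck (inclusion) order: every prefix height of `P` is at most that of `Q`. -/
def dyckLE (P Q : List Bool) : Prop := ∀ j, prefHeight P j ≤ prefHeight Q j

/-- Strict version of a relation `le`. -/
def ltOf (le : List Bool → List Bool → Prop) (P Q : List Bool) : Prop :=
  le P Q ∧ ¬ le Q P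

/-- There is a strict chain `P = c 0 < c 1 < ⋯ < c k = Q` inside `S`. -/
def HasChainIn (S : Set (List Bool)) (le : List Bool → List Bool → Prop)
    (P Q : List Bool) (k : ℕ) : Prop :=
  ∃ c : ℕ → List Bool, c 0 = P ∧ c k = Q ∧ (∀ i ≤ k, c i ∈ S) ∧
    ∀ i < k, ltOf le (c i) (c (i + 1))

/-- The interval `[P,Q]` of the poset `(S, le)` has height `k`: `k` is the maximal
length of a chain from `P` to `Q`. -/
def IntervalHeight (S : Set (List Bool)) (le : List Bool → List Bool → Prop)
    (P Q : List Bool) (k : ℕ) : Prop :=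
  HasChainIn S le P Q k ∧ ∀ m, HasChainIn S le P Q m → m ≤ k

/-- The interval `[P,Q]` of the poset `(S, le)` is linear: it is totally ordered. -/
def LinearInterval (S : Set (List Bool)) (le : List Bool → List Bool → Prop)
    (P Q : List Bool) : Prop :=
  P ∈ S ∧ Q ∈ S ∧ le P Q ∧
  ∀ R R', R ∈ S → R' ∈ S → le P R → le R Q → le P R' → le R' Q → le R R' ∨ le R' R

/-- `Q` covers `P` in the poset `(S, le)`. -/
def CovIn (S : Set (List Bool)) (le : List Bool → List Bool → Prop)
    (P Q : List Bool) : Prop :=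
  P ∈ S ∧ Q ∈ S ∧ ltOf le P Q ∧ ∀ R ∈ S, ¬ (ltOf le P R ∧ ltOf le R Q)

/-- The number of valleys (factors `du`) of `w`. -/
def valleys (w : List Bool) : ℕ :=
  ((List.range w.length).filter fun q => !w.getD q true && w.getD (q + 1) false).length

/-!
Record a word by the δ-altitudes at which its up steps start. A δ-rotation at `u_i` raises by one
exactly the up steps of the δ-excursion of `u_i`, so the alt-Tamari order is contained in the
pointwise order of altitudes and is antisymmetric. Moreover, as long as `u_i` lies in the
δ-excursion of `u_m`, every rotation that raises `u_m` also raises `u_i`, and `u_i` stays in that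
δ-excursion.

Between `P = A d C_1⋯C_k B` and `Q = A C_1⋯C_k d B`, each up step of `C_1⋯C_k` is raised exactly
once. If the first rotation from `P` towards `Q` took place at an up step `u_i` other than the first
one of `C_1`, it would put or leave `u_i` in the δ-excursion of an earlier up step `u_m` of
`C_1⋯C_k`. But `u_m` has yet to be raised, which raises `u_i` a second time. Hence the only first
step is the rotation at `C_1`, and by iteration `[P, Q]` consists of the words
`A C_1⋯C_i d C_{i+1}⋯C_k B`.
-/

section Chains

open Relation

variable {α : Type*} {r : α → α → Prop} {c : ℕ → α} {k : ℕ}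

theorem reflTransGen_of_le (hc : ∀ i < k, r (c i) (c (i + 1))) {i j : ℕ} (hij : i ≤ j)
    (hjk : j ≤ k) : ReflTransGen r (c i) (c j) :=
  (reflTransGen_of_succ_of_le (fun i j => r (c i) (c j))
    (fun l hl => hc l (hl.2.trans_le hjk)) hij).lift c fun _ _ h => h

theorem exists_le_eq_of_reflTransGen (hr : ∀ x y, r x y → ¬ ReflTransGen r y x)
    (hsucc : ∀ i < k, ∀ y, r (c i) y → ReflTransGen r y (c k) → y = c (i + 1)) {x : α}
    (h0 : ReflTransGen r (c 0) x) (hk : ReflTransGen r x (c k)) : ∃ i ≤ k, x = c i := by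
  induction h0 with
  | refl => exact ⟨0, k.zero_le, rfl⟩
  | tail _ hxy ih =>
    obtain ⟨i, hi, rfl⟩ := ih (hk.head hxy)
    rcases hi.lt_or_eq with hi | rfl
    · exact ⟨i + 1, hi, hsucc i hi _ hxy hk⟩
    · exact absurd hk (hr _ _ hxy)

end Chains

section Intervals

open Relation

variable {r : List Bool → List Bool → Prop} {S : Set (List Bool)} {c : ℕ → List Bool} {k : ℕ}

theorem linearInterval_of_chain (hS : ∀ i ≤ k, c i ∈ S) (hc : ∀ i < k, r (c i) (c (i + 1)))
    (hmem : ∀ x, ReflTransGen r (c 0) x → ReflTransGen r x (c k) → ∃ i ≤ k, x = c i) :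
    LinearInterval S (ReflTransGen r) (c 0) (c k) := by
  refine ⟨hS 0 k.zero_le, hS k le_rfl, reflTransGen_of_le hc k.zero_le le_rfl, ?_⟩
  intro x y _ _ h0x hxk h0y hyk
  obtain ⟨i, hi, rfl⟩ := hmem x h0x hxk
  obtain ⟨j, hj, rfl⟩ := hmem y h0y hyk
  exact (le_total i j).imp (reflTransGen_of_le hc · hj) (reflTransGen_of_le hc · hi)

theorem le_of_hasChainIn (hc : ∀ i < k, r (c i) (c (i + 1)))
    (hmem : ∀ x, ReflTransGen r (c 0) x → ReflTransGen r x (c k) → ∃ i ≤ k, x = c i) {m : ℕ}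
    (h : HasChainIn S (ReflTransGen r) (c 0) (c k) m) : m ≤ k := by
  obtain ⟨e, he0, hem, -, he⟩ := h
  have mono {i j : ℕ} (hij : i ≤ j) (hj : j ≤ m) : ReflTransGen r (e i) (e j) := by
    simpa only [reflTransGen_eq_self] using reflTransGen_of_le (fun i hi => (he i hi).1) hij hj
  have index (i : ℕ) (hi : i ≤ m) : ∃ l ≤ k, e i = c l :=
    hmem _ (he0 ▸ mono i.zero_le hi) (hem ▸ mono hi le_rfl)
  choose! f hfk hf using index
  have lt_succ (i : ℕ) (hi : i < m) : f i < f (i + 1) := by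
    by_contra! hle
    have := reflTransGen_of_le hc hle (hfk i hi.le)
    rw [← hf i hi.le, ← hf (i + 1) hi] at this
    exact (he i hi).2 this
  have le_apply (i : ℕ) (hi : i ≤ m) : i ≤ f i := by
    induction i with
    | zero => exact (f 0).zero_le
    | succ i ih => exact (ih (by omega)).trans_lt (lt_succ i hi)
  exact (le_apply m le_rfl).trans (hfk m le_rfl)

theorem intervalHeight_of_chain (hr : ∀ x y, r x y → ¬ ReflTransGen r y x)
    (hS : ∀ i ≤ k, c i ∈ S) (hc : ∀ i < k, r (c i) (c (i + 1)))
    (hmem : ∀ x, ReflTransGen r (c 0) x → ReflTransGen r x (c k) → ∃ i ≤ k, x = c i) :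
    IntervalHeight S (ReflTransGen r) (c 0) (c k) k :=
  ⟨⟨c, rfl, rfl, hS, fun i hi => ⟨.single (hc i hi), hr _ _ (hc i hi)⟩⟩,
    fun _ => le_of_hasChainIn hc hmem⟩

end Intervals

section Altitude

/-- The number of down steps of `w` before its up step of index `j`. Up steps are indexed from `0`;
if there is no such up step, all down steps are counted. -/
def downsBefore : List Bool → ℕ → ℕ
  | [], _ => 0
  | false :: w, j => downsBefore w j + 1
  | true :: _, 0 => 0
  | true :: w, j + 1 => downsBefore w j

/-- The `δ`-elevation of `w` as a factor preceded by `a` up steps. Unlike `elev`, it does not refer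
to the word containing the factor. -/
def wordElev (δ : ℕ → ℤ) (a : ℕ) (w : List Bool) : ℤ :=
  ∑ t ∈ Finset.range (w.count true), δ (a + t + 1) - w.count false

/-- The `δ`-altitude at which the up step of index `j` (from `0`) of `w` starts, relative to the
start of `w`, when `a` up steps precede `w`. -/
def altitude (δ : ℕ → ℤ) (a : ℕ) (w : List Bool) (j : ℕ) : ℤ :=
  ∑ t ∈ Finset.range j, δ (a + t + 1) - downsBefore w j

theorem downsBefore_append_of_lt {u : List Bool} {j : ℕ} (h : j < u.count true) (v : List Bool) :
    downsBefore (u ++ v) j = downsBefore u j := by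
  fun_induction downsBefore u j <;> simp_all [downsBefore]

theorem downsBefore_append_add (u v : List Bool) (j : ℕ) :
    downsBefore (u ++ v) (u.count true + j) = u.count false + downsBefore v j := by
  induction u with
  | nil => simp
  | cons b u ih =>
    cases b
    · simp [downsBefore, ih, add_right_comm]
    · simp [downsBefore, ih, add_right_comm _ 1 j]

theorem exists_eq_append_true_cons {w : List Bool} {j : ℕ} (h : j < w.count true) :
    ∃ u v, w = u ++ true :: v ∧ u.count true = j := by
  fun_induction downsBefore w j with
  | case1 => simp at h
  | case2 j w ih =>
    obtain ⟨u, v, rfl, hu⟩ := ih (by simpa using h)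
    exact ⟨false :: u, v, by simp, by simpa using hu⟩
  | case3 w => exact ⟨[], w, by simp⟩
  | case4 w j ih =>
    obtain ⟨u, v, rfl, hu⟩ := ih (by simpa using h)
    exact ⟨true :: u, v, by simp, by simpa using hu⟩

theorem append_true_cons_inj {u u' v v' : List Bool} (h : u ++ true :: v = u' ++ true :: v')
    (hu : u.count true = u'.count true) : u = u' ∧ v = v' := by
  rcases List.append_eq_append_iff.1 h with ⟨x, rfl, hx⟩ | ⟨x, rfl, hx⟩ <;>
    cases x <;> simp_all

variable (δ : ℕ → ℤ) (a : ℕ)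

theorem wordElev_append (u v : List Bool) :
    wordElev δ a (u ++ v) = wordElev δ a u + wordElev δ (a + u.count true) v := by
  simp only [wordElev, List.count_append, Finset.sum_range_add, Nat.cast_add, ← add_assoc]
  ring

theorem altitude_append_add (u v : List Bool) (j : ℕ) :
    altitude δ a (u ++ v) (u.count true + j) =
      wordElev δ a u + altitude δ (a + u.count true) v j := by
  simp only [wordElev, altitude, downsBefore_append_add, Finset.sum_range_add, Nat.cast_add,
    ← add_assoc]
  ring

theorem altitude_append_of_lt {u : List Bool} {j : ℕ} (h : j < u.count true) (v : List Bool) :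
    altitude δ a (u ++ v) j = altitude δ a u j := by
  simp only [altitude, downsBefore_append_of_lt h]

theorem altitude_false_cons (w : List Bool) (j : ℕ) :
    altitude δ a (false :: w) j = altitude δ a w j - 1 := by
  simp only [altitude, downsBefore, Nat.cast_add, Nat.cast_one]
  ring

theorem altitude_true_cons_zero (w : List Bool) : altitude δ a (true :: w) 0 = 0 := by
  simp [altitude, downsBefore]

theorem altitude_zero_nonpos (w : List Bool) : altitude δ a w 0 ≤ 0 := by
  simp [altitude]

theorem exists_prefix_wordElev_eq_altitude {w : List Bool} {j : ℕ} (h : j < w.count true) :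
    ∃ u, u <+: w ∧ u ≠ w ∧ u.count true = j ∧ altitude δ a w j = wordElev δ a u := by
  obtain ⟨u, v, rfl, rfl⟩ := exists_eq_append_true_cons h
  refine ⟨u, List.prefix_append _ _, by simp, rfl, ?_⟩
  simpa [altitude_true_cons_zero] using altitude_append_add δ a u (true :: v) 0

theorem altitude_append_false_cons_of_lt {A C : List Bool} {j : ℕ} (h : j < C.count true)
    (B : List Bool) :
    altitude δ a (A ++ false :: (C ++ B)) (A.count true + j) =
      wordElev δ a A - 1 + altitude δ (a + A.count true) C j := by
  rw [altitude_append_add, altitude_false_cons, altitude_append_of_lt _ _ h]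
  ring

theorem altitude_append_false_cons_le (A C B : List Bool) :
    altitude δ a (A ++ false :: (C ++ B)) (A.count true + C.count true) ≤
      wordElev δ a A - 1 + wordElev δ (a + A.count true) C := by
  rw [altitude_append_add, altitude_false_cons, ← add_zero (C.count true), altitude_append_add]
  linarith [altitude_zero_nonpos δ (a + A.count true + C.count true) B]

theorem altitude_move_down (A C B : List Bool) (j : ℕ) :
    altitude δ a (A ++ (C ++ false :: B)) j = altitude δ a (A ++ false :: (C ++ B)) j +
      if A.count true ≤ j ∧ j < A.count true + C.count true then 1 else 0 := by
  rcases lt_or_ge j (A.count true) with hA | hA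
  · simp [altitude_append_of_lt _ _ hA, hA.not_ge]
  obtain ⟨j, rfl⟩ := Nat.exists_eq_add_of_le hA
  rcases lt_or_ge j (C.count true) with hC | hC
  · simp [altitude_append_add, altitude_false_cons, altitude_append_of_lt _ _ hC, hC, add_assoc]
  obtain ⟨j, rfl⟩ := Nat.exists_eq_add_of_le hC
  simp [altitude_append_add, altitude_false_cons, add_sub_assoc]

theorem elev_append_append (A C B : List Bool) :
    elev δ (A ++ (C ++ B)) A.length (A.length + C.length) = wordElev δ (A.count true) C := by
  induction C using List.reverseRecOn generalizing B with
  | nil => simp [elev, wordElev]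
  | append_singleton C b ih =>
    have hletter : stepVal δ (A ++ (C ++ b :: B)) (A.length + C.length) =
        wordElev δ (A.count true + C.count true) [b] := by
      have htake : (A ++ (C ++ b :: B)).take (A.length + C.length + 1) = A ++ (C ++ [b]) := by
        rw [show A ++ (C ++ b :: B) = (A ++ (C ++ [b])) ++ B by simp]
        exact List.take_left' (by simp [add_assoc])
      rw [stepVal, htake]
      cases b <;> simp [wordElev, add_assoc]
    rw [wordElev_append, ← ih (b :: B), ← hletter]
    simp only [elev, List.length_append, List.length_singleton, ← add_assoc, List.append_assoc,
      List.singleton_append]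
    exact Finset.sum_Ico_succ_top (by omega) _

end Altitude

section Excursions

/-- `C` is a `δ`-excursion when it is preceded by `a` up steps. -/
structure IsExc (δ : ℕ → ℤ) (a : ℕ) (C : List Bool) : Prop where
  exists_eq_cons : ∃ D, C = true :: D
  wordElev_eq_zero : wordElev δ a C = 0
  eq_of_isPrefix : ∀ U, U <+: C → U ≠ [] → wordElev δ a U = 0 → U = C

/-- The words of the list are consecutive `δ`-excursions, the first of them being preceded by `a`
up steps. -/
def IsExcSeq (δ : ℕ → ℤ) : ℕ → List (List Bool) → Prop
  | _, [] => True
  | a, C :: Cs => IsExc δ a C ∧ IsExcSeq δ (a + C.count true) Cs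

variable {δ : ℕ → ℤ} {a : ℕ}

theorem isDeltaExcAt_iff_isExc {A C B : List Bool} :
    IsDeltaExcAt δ (A ++ (C ++ B)) A.length C ↔ IsExc δ (A.count true) C := by
  have helev (m : ℕ) (hm : m ≤ C.length) :
      elev δ (A ++ (C ++ B)) A.length (A.length + m) = wordElev δ (A.count true) (C.take m) := by
    have := elev_append_append δ A (C.take m) (C.drop m ++ B)
    rwa [← List.append_assoc (C.take m), List.take_append_drop, List.length_take_of_le hm] at this
  constructor
  · rintro ⟨hup, m, hm, hle, hCm, h0, hmin⟩
    have hle' : m ≤ C.length + B.length := by simpa using hle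
    obtain rfl : C.length = m := by simpa [hle'] using congrArg List.length hCm
    refine ⟨?_, by simpa [h0] using (helev C.length le_rfl).symm, fun U hU hU0 h => ?_⟩
    · obtain ⟨b, D, rfl⟩ := List.exists_cons_of_length_pos hm
      exact ⟨D, by simpa using hup⟩
    · by_contra hne
      have hlt : U.length < C.length :=
        hU.length_le.lt_of_ne fun hl => hne (hU.eq_of_length hl)
      refine hmin U.length (List.length_pos_iff.2 hU0) hlt ?_
      rw [helev _ hlt.le, ← List.prefix_iff_eq_take.1 hU, h]
  · rintro ⟨⟨D, rfl⟩, h0, hmin⟩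
    refine ⟨by simp, (true :: D).length, by simp, by simp, by simp,
      by rw [elev_append_append, h0], ?_⟩
    intro m hm hlt h
    rw [helev m hlt.le] at h
    have := hmin _ (List.take_prefix m _) (by simp [hm.ne']) h
    exact hlt.not_ge (List.take_eq_self_iff _ |>.1 this)

theorem isExcSeq_of_isDeltaExcAt {A B : List Bool} {Cs : List (List Bool)}
    (h : ∀ j < Cs.length, IsDeltaExcAt δ (A ++ (Cs.flatten ++ B))
      (A.length + (Cs.take j).flatten.length) (Cs.getD j [])) :
    IsExcSeq δ (A.count true) Cs := by
  induction Cs generalizing A with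
  | nil => trivial
  | cons C Cs ih =>
    refine ⟨isDeltaExcAt_iff_isExc (B := Cs.flatten ++ B) |>.1 (by simpa using h 0 (by simp)), ?_⟩
    rw [← List.count_append]
    exact ih fun j hj => by simpa [add_assoc] using h (j + 1) (by simpa using hj)

theorem isExcSeq_append {Cs Ds : List (List Bool)} :
    IsExcSeq δ a (Cs ++ Ds) ↔ IsExcSeq δ a Cs ∧ IsExcSeq δ (a + Cs.flatten.count true) Ds := by
  induction Cs generalizing a with
  | nil => simp [IsExcSeq]
  | cons C Cs ih => simp [IsExcSeq, ih, add_assoc, and_assoc]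

namespace IsExc

variable {C : List Bool}

theorem count_pos (hC : IsExc δ a C) : 0 < C.count true := by
  obtain ⟨D, rfl⟩ := hC.exists_eq_cons
  simp

theorem altitude_zero (hC : IsExc δ a C) : altitude δ a C 0 = 0 := by
  obtain ⟨D, rfl⟩ := hC.exists_eq_cons
  exact altitude_true_cons_zero δ a D

theorem eq_of_append_eq {C' B B' : List Bool} (hC : IsExc δ a C) (hC' : IsExc δ a C')
    (h : C ++ B = C' ++ B') : C = C' := by
  have ne_nil {C : List Bool} (hC : IsExc δ a C) : C ≠ [] := by
    rintro rfl
    simpa using hC.count_pos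
  rcases List.prefix_or_prefix_of_prefix (List.prefix_append C B)
    (h ▸ List.prefix_append C' B') with hpre | hpre
  · exact hC'.eq_of_isPrefix C hpre (ne_nil hC) hC.wordElev_eq_zero
  · exact (hC.eq_of_isPrefix C' hpre (ne_nil hC') hC'.wordElev_eq_zero).symm

theorem wordElev_pos_of_isPrefix (hδ : ∀ i, 0 ≤ δ i) (hC : IsExc δ a C) {U : List Bool}
    (hU : U <+: C) (hU0 : U ≠ []) (hUC : U ≠ C) : 0 < wordElev δ a U := by
  induction U using List.reverseRecOn with
  | nil => exact absurd rfl hU0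
  | append_singleton U b ih =>
    have hne : wordElev δ a (U ++ [b]) ≠ 0 := fun h => hUC (hC.eq_of_isPrefix _ hU hU0 h)
    rcases eq_or_ne U [] with rfl | hU'
    · obtain ⟨D, rfl⟩ := hC.exists_eq_cons
      obtain rfl : b = true := by simpa using hU
      have hup : wordElev δ a ([] ++ [true]) = δ (a + 1) := by simp [wordElev]
      rw [hup] at hne ⊢
      exact (hδ _).lt_of_ne' hne
    · have hpos := ih ((List.prefix_append _ _).trans hU) hU' fun h => by
        simpa [h] using hU.length_le
      have hb : -1 ≤ wordElev δ (a + U.count true) [b] := by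
        cases b
        · simp [wordElev]
        · exact (by simp : (-1 : ℤ) ≤ 0).trans (by simpa [wordElev] using hδ _)
      rw [wordElev_append] at hne ⊢
      omega

theorem altitude_pos (hδ : ∀ i, 0 ≤ δ i) (hC : IsExc δ a C) {j : ℕ} (h0 : 0 < j)
    (hj : j < C.count true) : 0 < altitude δ a C j := by
  obtain ⟨U, hU, hUC, rfl, h⟩ := exists_prefix_wordElev_eq_altitude δ a hj
  rw [h]
  exact hC.wordElev_pos_of_isPrefix hδ hU (by rintro rfl; simp at h0) hUC

theorem altitude_nonneg (hδ : ∀ i, 0 ≤ δ i) (hC : IsExc δ a C) {j : ℕ} (hj : j < C.count true) :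
    0 ≤ altitude δ a C j := by
  rcases j.eq_zero_or_pos with rfl | h0
  · exact hC.altitude_zero.ge
  · exact (hC.altitude_pos hδ h0 hj).le

theorem altitude_append_le (hδ : ∀ i, 0 ≤ δ i) {A : List Bool} (hC : IsExc δ (a + A.count true) C)
    (B : List Bool) {j : ℕ} (hAj : A.count true ≤ j) (hj : j < A.count true + C.count true) :
    altitude δ a (A ++ false :: (C ++ B)) (A.count true + C.count true) ≤
      altitude δ a (A ++ false :: (C ++ B)) j := by
  obtain ⟨j, rfl⟩ := Nat.exists_eq_add_of_le hAj
  have hjC : j < C.count true := by omega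
  rw [altitude_append_false_cons_of_lt _ _ hjC]
  have hend := altitude_append_false_cons_le δ a A C B
  have hnonneg := hC.altitude_nonneg hδ hjC
  rw [hC.wordElev_eq_zero] at hend
  linarith

end IsExc

theorem IsExcSeq.altitude_zero {Cs : List (List Bool)} (hCs : IsExcSeq δ a Cs) :
    altitude δ a Cs.flatten 0 = 0 := by
  cases Cs with
  | nil => simp [altitude, downsBefore]
  | cons C Cs => rw [List.flatten_cons, altitude_append_of_lt _ _ hCs.1.count_pos,
      hCs.1.altitude_zero]

/-- The witness `m` is the first up step of the excursion containing the up step before `i`. -/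
theorem IsExcSeq.exists_lt_altitude_le (hδ : ∀ i, 0 ≤ δ i) {Cs : List (List Bool)}
    (hCs : IsExcSeq δ a Cs) {i : ℕ} (h0 : 0 < i) (hi : i < Cs.flatten.count true) :
    ∃ m < i, altitude δ a Cs.flatten m ≤ altitude δ a Cs.flatten i ∧
      ∀ j, m < j → j < i → altitude δ a Cs.flatten m < altitude δ a Cs.flatten j := by
  induction Cs generalizing a i with
  | nil => simp at hi
  | cons C Cs ih =>
    obtain ⟨hC, hCs⟩ := hCs
    simp only [List.flatten_cons, List.count_append] at hi ⊢
    have left {j : ℕ} (hj : j < C.count true) :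
        altitude δ a (C ++ Cs.flatten) j = altitude δ a C j := altitude_append_of_lt δ a hj _
    have right (j : ℕ) : altitude δ a (C ++ Cs.flatten) (C.count true + j) =
        altitude δ (a + C.count true) Cs.flatten j := by
      rw [altitude_append_add, hC.wordElev_eq_zero, zero_add]
    rcases le_or_gt i (C.count true) with hiC | hiC
    · refine ⟨0, h0, ?_, fun j hj0 hji => ?_⟩ <;> rw [left hC.count_pos, hC.altitude_zero]
      · rcases hiC.lt_or_eq with hiC | rfl
        · exact left hiC ▸ hC.altitude_nonneg hδ hiC
        · simpa [hCs.altitude_zero] using (right 0).ge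
      · exact left (hji.trans_le hiC) ▸ hC.altitude_pos hδ hj0 (hji.trans_le hiC)
    · obtain ⟨i, rfl⟩ := Nat.exists_eq_add_of_lt hiC
      obtain ⟨m, hmi, hle, hlt⟩ := ih hCs i.succ_pos (by omega)
      refine ⟨C.count true + m, by omega, ?_, fun j hmj hji => ?_⟩
      · rwa [add_assoc, right, right]
      · obtain ⟨j, rfl⟩ := Nat.exists_eq_add_of_le (show C.count true ≤ j by omega)
        rw [right, right]
        exact hlt j (by omega) (by omega)

end Excursions

section Rotations

variable {δ : ℕ → ℤ} {R R' : List Bool}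

theorem deltaRot_iff_isExc :
    DeltaRot δ R R' ↔ ∃ A C B, R = A ++ false :: (C ++ B) ∧ R' = A ++ (C ++ false :: B) ∧
      IsExc δ (A.count true) C := by
  have (A C B : List Bool) : IsDeltaExcAt δ (A ++ false :: (C ++ B)) (A.length + 1) C ↔
      IsExc δ (A.count true) C := by
    simpa using isDeltaExcAt_iff_isExc (δ := δ) (A := A ++ [false]) (C := C) (B := B)
  constructor <;> rintro ⟨A, C, B, rfl, rfl, hC⟩
  · exact ⟨A, C, B, rfl, rfl, (this A C B).1 hC⟩
  · exact ⟨A, C, B, rfl, rfl, (this A C B).2 hC⟩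

theorem exists_prefix_of_prefix_move_down {A C B p : List Bool}
    (hp : p <+: A ++ (C ++ false :: B)) :
    ∃ q, q <+: A ++ false :: (C ++ B) ∧ q.count true = p.count true ∧
      p.count false ≤ q.count false := by
  rcases List.prefix_or_prefix_of_prefix hp (List.prefix_append A _) with h | ⟨p, rfl⟩
  · exact ⟨p, h.trans (List.prefix_append _ _), rfl, le_rfl⟩
  rw [List.prefix_append_right_inj] at hp
  rcases List.prefix_or_prefix_of_prefix hp (List.prefix_append C _) with h | ⟨p, rfl⟩
  · exact ⟨A ++ false :: p, by simpa using h.trans (List.prefix_append _ _), by simp, by simp⟩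
  rw [List.prefix_append_right_inj, List.prefix_cons_iff] at hp
  rcases hp with rfl | ⟨p, rfl, hp⟩
  · exact ⟨A ++ false :: C, by simp, by simp, by simp⟩
  · exact ⟨A ++ false :: (C ++ p), by simpa using hp, by simp, by simp; omega⟩

theorem IsDyckWord.of_deltaRot {n : ℕ} (hR : IsDyckWord n R) (h : DeltaRot δ R R') :
    IsDyckWord n R' := by
  obtain ⟨A, C, B, rfl, rfl, -⟩ := h
  obtain ⟨htrue, hfalse, hpre⟩ := hR
  refine ⟨by simpa using htrue, by simpa [add_assoc] using hfalse, fun p hp => ?_⟩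
  obtain ⟨q, hq, hup, hdown⟩ := exists_prefix_of_prefix_move_down hp
  exact hdown.trans (hup ▸ hpre q hq)

theorem altLE.altitude_le (h : altLE δ R R') (j : ℕ) :
    altitude δ 0 R j ≤ altitude δ 0 R' j := by
  induction h with
  | refl => exact le_rfl
  | tail _ h ih =>
    obtain ⟨A, C, B, rfl, rfl, -⟩ := h
    rw [altitude_move_down]
    split_ifs <;> omega

theorem DeltaRot.not_altLE (h : DeltaRot δ R R') : ¬ altLE δ R' R := by
  obtain ⟨A, C, B, rfl, rfl, hC⟩ := deltaRot_iff_isExc.1 h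
  intro hle
  have := hle.altitude_le (A.count true)
  rw [altitude_move_down, if_pos ⟨le_rfl, by simpa using hC.count_pos⟩] at this
  omega

/-- The up step of index `i` of `w` belongs to the `δ`-excursion of the up step of index `m`
(indices start from `0`), expressed by altitudes. -/
def InExcursion (δ : ℕ → ℤ) (w : List Bool) (m i : ℕ) : Prop :=
  m ≤ i ∧ ∀ j, m < j → j ≤ i → altitude δ 0 w m < altitude δ 0 w j

theorem InExcursion.of_le {w : List Bool} {m i j : ℕ} (h : InExcursion δ w m i) (hmj : m ≤ j)
    (hji : j ≤ i) : InExcursion δ w m j :=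
  ⟨hmj, fun l hml hlj => h.2 l hml (hlj.trans hji)⟩

theorem InExcursion.altitude_sub_le_of_deltaRot (hδ : ∀ i, 0 ≤ δ i) {m i : ℕ}
    (hmi : InExcursion δ R m i) (h : DeltaRot δ R R') :
    altitude δ 0 R i - altitude δ 0 R m ≤ altitude δ 0 R' i - altitude δ 0 R' m := by
  obtain ⟨A, C, B, rfl, rfl, hC⟩ := deltaRot_iff_isExc.1 h
  obtain ⟨hle, habove⟩ := hmi
  rw [altitude_move_down, altitude_move_down]
  by_cases hm : A.count true ≤ m ∧ m < A.count true + C.count true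
  · have hi : i < A.count true + C.count true := by
      by_contra! hend
      exact (habove _ hm.2 hend).not_ge
        (IsExc.altitude_append_le hδ (by simpa using hC) B hm.1 hm.2)
    rw [if_pos hm, if_pos ⟨hm.1.trans hle, hi⟩]
    linarith
  · rw [if_neg hm]
    split_ifs <;> linarith

theorem InExcursion.of_deltaRot (hδ : ∀ i, 0 ≤ δ i) {m i : ℕ} (hmi : InExcursion δ R m i)
    (h : DeltaRot δ R R') : InExcursion δ R' m i := by
  refine ⟨hmi.1, fun j hmj hji => ?_⟩
  have := (hmi.of_le hmj.le hji).altitude_sub_le_of_deltaRot hδ h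
  linarith [hmi.2 j hmj hji]

theorem InExcursion.altitude_sub_le_of_altLE (hδ : ∀ i, 0 ≤ δ i) {m i : ℕ}
    (hmi : InExcursion δ R m i) (h : altLE δ R R') :
    altitude δ 0 R i - altitude δ 0 R m ≤ altitude δ 0 R' i - altitude δ 0 R' m := by
  induction h using Relation.ReflTransGen.head_induction_on with
  | refl => exact le_rfl
  | head hrot _ ih =>
    exact (hmi.altitude_sub_le_of_deltaRot hδ hrot).trans (ih (hmi.of_deltaRot hδ hrot))

end Rotations

section RightIntervals

variable {δ : ℕ → ℤ} {A B C : List Bool} {Cs : List (List Bool)}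

theorem IsExcSeq.exists_lt_inExcursion (hδ : ∀ i, 0 ≤ δ i) (hCs : IsExcSeq δ (A.count true) Cs)
    {i : ℕ} (hAi : A.count true < i) (hi : i < A.count true + Cs.flatten.count true)
    {R : List Bool}
    (hlt : ∀ j < i, altitude δ 0 R j = altitude δ 0 (A ++ false :: (Cs.flatten ++ B)) j)
    (hRi : altitude δ 0 (A ++ false :: (Cs.flatten ++ B)) i < altitude δ 0 R i) :
    ∃ m, A.count true ≤ m ∧ m < i ∧ InExcursion δ R m i := by
  obtain ⟨i, rfl⟩ := Nat.exists_eq_add_of_le hAi.le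
  obtain ⟨m, hmi, hle, habove⟩ :=
    hCs.exists_lt_altitude_le hδ (i := i) (by omega) (by omega)
  have hP (j : ℕ) (hj : j ≤ i) :
      altitude δ 0 (A ++ false :: (Cs.flatten ++ B)) (A.count true + j) =
        wordElev δ 0 A - 1 + altitude δ (A.count true) Cs.flatten j := by
    rw [altitude_append_false_cons_of_lt δ 0 (by omega), zero_add]
  refine ⟨A.count true + m, by omega, by omega, by omega, fun j hmj hji => ?_⟩
  obtain ⟨j, rfl⟩ := Nat.exists_eq_add_of_le (show A.count true ≤ j by omega)
  rw [hlt _ (by omega), hP m hmi.le]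
  rcases (show j ≤ i by omega).eq_or_lt with rfl | hji
  · linarith [hP j le_rfl]
  · rw [hlt _ (by omega), hP j hji.le]
    linarith [habove j (by omega) hji]

theorem count_true_eq_of_altLE (hδ : ∀ i, 0 ≤ δ i) (hCs : IsExcSeq δ (A.count true) Cs)
    {A' B' C' : List Bool} (hC' : 0 < C'.count true)
    (hP : A ++ false :: (Cs.flatten ++ B) = A' ++ false :: (C' ++ B'))
    (hRQ : altLE δ (A' ++ (C' ++ false :: B')) (A ++ (Cs.flatten ++ false :: B))) :
    A.count true = A'.count true := by
  set i := A'.count true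
  set P := A ++ false :: (Cs.flatten ++ B)
  set R := A' ++ (C' ++ false :: B')
  set Q := A ++ (Cs.flatten ++ false :: B)
  have hR (j : ℕ) : altitude δ 0 R j =
      altitude δ 0 P j + if i ≤ j ∧ j < i + C'.count true then 1 else 0 :=
    hP ▸ altitude_move_down δ 0 A' C' B' j
  have hQ (j : ℕ) : altitude δ 0 Q j = altitude δ 0 P j +
      if A.count true ≤ j ∧ j < A.count true + Cs.flatten.count true then 1 else 0 :=
    altitude_move_down δ 0 A Cs.flatten B j
  have hRi : altitude δ 0 R i = altitude δ 0 P i + 1 := by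
    rw [hR, if_pos ⟨le_rfl, by omega⟩]
  have hRlt (j : ℕ) (hj : j < i) : altitude δ 0 R j = altitude δ 0 P j := by
    rw [hR, if_neg (by omega), add_zero]
  have hrange : A.count true ≤ i ∧ i < A.count true + Cs.flatten.count true := by
    by_contra hout
    have := hRQ.altitude_le i
    rw [hRi, hQ, if_neg hout] at this
    omega
  refine hrange.1.eq_of_not_lt fun hlt => ?_
  obtain ⟨m, hAm, hmi, hexc⟩ :=
    hCs.exists_lt_inExcursion hδ hlt hrange.2 hRlt (by rw [hRi]; exact lt_add_one _)
  have := hexc.altitude_sub_le_of_altLE hδ hRQ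
  rw [hRi, hRlt m hmi, hQ, hQ, if_pos hrange, if_pos ⟨hAm, by omega⟩] at this
  omega

theorem eq_of_deltaRot_of_altLE (hδ : ∀ i, 0 ≤ δ i) (hCs : IsExcSeq δ (A.count true) (C :: Cs))
    {R : List Bool} (hR : DeltaRot δ (A ++ false :: ((C :: Cs).flatten ++ B)) R)
    (hRQ : altLE δ R (A ++ ((C :: Cs).flatten ++ false :: B))) :
    R = A ++ (C ++ false :: (Cs.flatten ++ B)) := by
  obtain ⟨A', C', B', hP, rfl, hC'⟩ := deltaRot_iff_isExc.1 hR
  have hcount := count_true_eq_of_altLE hδ hCs hC'.count_pos hP hRQ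
  obtain ⟨D, hD⟩ := hCs.1.exists_eq_cons
  obtain ⟨D', hD'⟩ := hC'.exists_eq_cons
  have hsplit : (A ++ [false]) ++ true :: (D ++ (Cs.flatten ++ B)) =
      (A' ++ [false]) ++ true :: (D' ++ B') := by
    simpa [hD, hD'] using hP
  obtain ⟨hA, -⟩ := append_true_cons_inj hsplit (by simpa using hcount)
  obtain rfl : A = A' := List.append_cancel_right hA
  have hCB : C ++ (Cs.flatten ++ B) = C' ++ B' := by simpa using hP
  obtain rfl := hCs.1.eq_of_append_eq hC' hCB
  rw [List.append_cancel_left hCB]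

/-- The word `A C_1⋯C_i d C_{i+1}⋯C_k B`, which is the element of height `i` of a right interval. -/
def rightChain (A B : List Bool) (Cs : List (List Bool)) (i : ℕ) : List Bool :=
  (A ++ (Cs.take i).flatten) ++ false :: ((Cs.drop i).flatten ++ B)

theorem rightChain_zero : rightChain A B Cs 0 = A ++ false :: (Cs.flatten ++ B) := by
  simp [rightChain]

theorem rightChain_length :
    rightChain A B Cs Cs.length = A ++ (Cs.flatten ++ false :: B) := by
  simp [rightChain]

theorem rightChain_succ {i : ℕ} (hi : i < Cs.length) :
    rightChain A B Cs (i + 1) =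
      (A ++ (Cs.take i).flatten) ++ (Cs[i] ++ false :: ((Cs.drop (i + 1)).flatten ++ B)) := by
  rw [rightChain, List.take_succ_eq_append_getElem hi]
  simp only [List.flatten_append, List.flatten_singleton, List.append_assoc]

theorem IsExcSeq.drop (hCs : IsExcSeq δ (A.count true) Cs) (i : ℕ) :
    IsExcSeq δ ((A ++ (Cs.take i).flatten).count true) (Cs.drop i) := by
  rw [← List.take_append_drop i Cs, isExcSeq_append] at hCs
  rw [List.count_append]
  exact hCs.2

theorem deltaRot_rightChain (hCs : IsExcSeq δ (A.count true) Cs) {i : ℕ} (hi : i < Cs.length) :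
    DeltaRot δ (rightChain A B Cs i) (rightChain A B Cs (i + 1)) := by
  have hdrop := hCs.drop i
  rw [List.drop_eq_getElem_cons hi] at hdrop
  refine deltaRot_iff_isExc.2 ⟨_, _, _, ?_, rightChain_succ hi, hdrop.1⟩
  rw [rightChain, List.drop_eq_getElem_cons hi, List.flatten_cons, List.append_assoc Cs[i]]

theorem eq_rightChain_succ_of_deltaRot (hδ : ∀ i, 0 ≤ δ i) (hCs : IsExcSeq δ (A.count true) Cs)
    {i : ℕ} (hi : i < Cs.length) {R : List Bool} (hR : DeltaRot δ (rightChain A B Cs i) R)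
    (hRQ : altLE δ R (rightChain A B Cs Cs.length)) : R = rightChain A B Cs (i + 1) := by
  have hQ : rightChain A B Cs Cs.length =
      (A ++ (Cs.take i).flatten) ++ ((Cs.drop i).flatten ++ false :: B) := by
    rw [rightChain_length, List.append_assoc, ← List.append_assoc (Cs.take i).flatten,
      ← List.flatten_append, List.take_append_drop]
  have hdrop := hCs.drop i
  rw [hQ] at hRQ
  rw [rightChain] at hR
  rw [List.drop_eq_getElem_cons hi] at hdrop hR hRQ
  rw [rightChain_succ hi]
  exact eq_of_deltaRot_of_altLE hδ hdrop hR hRQ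

end RightIntervals

theorem stmt15_general {δ : ℕ → ℤ} (hδ : ∀ i, 0 ≤ δ i) {S : Set (List Bool)}
    (hS : ∀ R R', R ∈ S → DeltaRot δ R R' → R' ∈ S) {A B : List Bool} {Cs : List (List Bool)}
    (hP : A ++ false :: (Cs.flatten ++ B) ∈ S)
    (hC : ∀ j < Cs.length, IsDeltaExcAt δ (A ++ false :: (Cs.flatten ++ B))
      (A.length + 1 + ((Cs.take j).flatten).length) (Cs.getD j [])) :
    LinearInterval S (altLE δ) (A ++ false :: (Cs.flatten ++ B))
        (A ++ (Cs.flatten ++ false :: B)) ∧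
      IntervalHeight S (altLE δ) (A ++ false :: (Cs.flatten ++ B))
        (A ++ (Cs.flatten ++ false :: B)) Cs.length := by
  have hCs : IsExcSeq δ (A.count true) Cs := by
    simpa using isExcSeq_of_isDeltaExcAt (A := A ++ [false]) (B := B) (by simpa using hC)
  rw [← rightChain_zero] at hP ⊢
  rw [← rightChain_length]
  have hrot (i : ℕ) (hi : i < Cs.length) := deltaRot_rightChain (B := B) hCs hi
  have hmem (i : ℕ) (hi : i ≤ Cs.length) : rightChain A B Cs i ∈ S := by
    induction i with
    | zero => exact hP
    | succ i ih => exact hS _ _ (ih (by omega)) (hrot i hi)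
  have hanti (R R' : List Bool) (h : DeltaRot δ R R') := h.not_altLE
  have hinterval (R : List Bool) := exists_le_eq_of_reflTransGen (x := R) hanti
    fun i hi _ => eq_rightChain_succ_of_deltaRot (A := A) (B := B) hδ hCs hi
  exact ⟨linearInterval_of_chain hmem hrot hinterval,
    intervalHeight_of_chain hanti hmem hrot hinterval⟩

/-- a right interval of height `k ≥ 2` in `Tam^δ_n` is linear of
height `k`. -/
theorem stmt15 (n k : ℕ) (hk : 2 ≤ k) (δ : ℕ → ℤ) (hδ : IsIncFun δ)
    (P Q A B : List Bool) (Cs : List (List Bool)) (hlen : Cs.length = k)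
    (hP : IsDyckWord n P) (hQ : IsDyckWord n Q)
    (hPd : P = A ++ false :: (Cs.flatten ++ B))
    (hQd : Q = A ++ (Cs.flatten ++ false :: B))
    (hC : ∀ j < k, IsDeltaExcAt δ P (A.length + 1 + ((Cs.take j).flatten).length)
      (Cs.getD j [])) :
    altLE δ P Q ∧ LinearInterval (DyckSet n) (altLE δ) P Q ∧
      IntervalHeight (DyckSet n) (altLE δ) P Q k := by
  subst hPd hQd hlen
  have h := stmt15_general (fun i => (hδ i).elim Eq.ge (· ▸ zero_le_one))
    (fun _ _ hR hrot => IsDyckWord.of_deltaRot hR hrot) hP hC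
  exact ⟨h.1.2.2.1, h⟩
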